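/- Let F be a field of characteristic zero, P ∈ F[x_1,…,x_n], and assume the hypersurface P = 0 is smooth, i.e., the ideal generated by P, ∂_1P, …, ∂_nP is the unit ideal of F[x_1,…,x_n]. Let Ω denote the complex of polynomial differential forms on F^n with the de Rham differential d, and let Ω/(P,dP) denote the quotient complex of Ω by the subcomplex P·Ω + dP∧Ω (which is stable under d), with the induced differential. Let Ω' denote the twisted de Rham complex of the function f(t,x_1,…,x_n) = t·P(x_1,…,x_n) on F^{n+1}, with differential d_f = d + d(tP)∧. Then the map ω ↦ ω̃∧dP∧dt, where ω̃ ∈ Ω is any lift of ω, induces for every k an isomorphism H^k(Ω/(P,dP)) ≅ H^{k+2}_{tP}(F^{n+1}). -/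

import Mathlib

open MvPolynomial

noncomputable section

/-- Polynomial differential forms on `K^n`: a form assigns to each subset
`s ⊆ {1,…,n}` (the indices of `dx_{i_1} ∧ ⋯ ∧ dx_{i_k}` with `i_1 < ⋯ < i_k`)
a polynomial coefficient. -/
abbrev Form (n : ℕ) (K : Type*) [CommRing K] :=
  Finset (Fin n) → MvPolynomial (Fin n) K

/-- The sign `(-1)^{#{j ∈ s | j < i}}`. -/
def sgn {n : ℕ} (K : Type*) [CommRing K] (s : Finset (Fin n)) (i : Fin n) :
    MvPolynomial (Fin n) K :=
  (-1) ^ (s.filter (fun j => j < i)).card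

/-- The twisted de Rham differential `d_α ω = dω + α ∧ ω` associated to a
(closed) polynomial 1-form `α = Σ_i α_i dx_i`. -/
def dTwist {n : ℕ} {K : Type*} [CommRing K]
    (α : Fin n → MvPolynomial (Fin n) K) :
    Form n K →ₗ[K] Form n K where
  toFun ω := fun s => ∑ i ∈ s,
    sgn K s i * (pderiv i (ω (s.erase i)) + α i * ω (s.erase i))
  map_add' ω₁ ω₂ := by
    funext s
    simp only [Pi.add_apply]
    rw [← Finset.sum_add_distrib]
    refine Finset.sum_congr rfl fun i _ => ?_
    simp only [map_add]
    ring
  map_smul' c ω := by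
    funext s
    simp only [Pi.smul_apply, map_smul, RingHom.id_apply, Finset.smul_sum]
    refine Finset.sum_congr rfl fun i _ => ?_
    simp [mul_add, mul_smul_comm, smul_add, mul_assoc]

/-- The (untwisted) polynomial de Rham differential. -/
abbrev dRham (n : ℕ) (K : Type*) [CommRing K] : Form n K →ₗ[K] Form n K :=
  dTwist (fun _ => 0)

/-- Multiplication of a form by a 1-form `α`, `ω ↦ α ∧ ω`. -/
def wedge1 {n : ℕ} {K : Type*} [CommRing K]
    (α : Fin n → MvPolynomial (Fin n) K) :
    Form n K →ₗ[K] Form n K where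
  toFun ω := fun s => ∑ i ∈ s, sgn K s i * (α i * ω (s.erase i))
  map_add' ω₁ ω₂ := by
    funext s
    simp only [Pi.add_apply]
    rw [← Finset.sum_add_distrib]
    refine Finset.sum_congr rfl fun i _ => ?_
    ring
  map_smul' c ω := by
    funext s
    simp only [Pi.smul_apply, RingHom.id_apply, Finset.smul_sum]
    refine Finset.sum_congr rfl fun i _ => ?_
    simp [mul_smul_comm]

/-- Forms of pure degree `k`: those supported on index sets of cardinality `k`. -/
def formDeg (n : ℕ) (K : Type*) [CommRing K] (k : ℕ) : Submodule K (Form n K) where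
  carrier := {ω | ∀ s : Finset (Fin n), s.card ≠ k → ω s = 0}
  add_mem' := by
    intro a b ha hb s hs
    simp [Pi.add_apply, ha s hs, hb s hs]
  zero_mem' := fun s _ => rfl
  smul_mem' := by
    intro c a ha s hs
    simp [Pi.smul_apply, ha s hs]

/-- Degree-`k` cocycles of the twisted de Rham complex. -/
def cocycles {n : ℕ} {K : Type*} [CommRing K]
    (α : Fin n → MvPolynomial (Fin n) K) (k : ℕ) : Submodule K (Form n K) :=
  formDeg n K k ⊓ LinearMap.ker (dTwist α)

/-- Degree-`k` coboundaries of the twisted de Rham complex. -/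
def cobounds {n : ℕ} {K : Type*} [CommRing K]
    (α : Fin n → MvPolynomial (Fin n) K) (k : ℕ) : Submodule K (Form n K) :=
  Submodule.map (dTwist α) (formDeg n K (k - 1))

/-- The degree-`k` twisted de Rham cohomology of the 1-form `α`. -/
abbrev Htwist {n : ℕ} {K : Type*} [CommRing K]
    (α : Fin n → MvPolynomial (Fin n) K) (k : ℕ) :=
  (cocycles α k) ⧸ (Submodule.comap (cocycles α k).subtype (cobounds α k))

/-- The differential `df` of a polynomial, as the family of coefficients of the
1-form `Σ_i (∂f/∂x_i) dx_i`. -/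
def grad {n : ℕ} {K : Type*} [CommRing K] (f : MvPolynomial (Fin n) K) :
    Fin n → MvPolynomial (Fin n) K :=
  fun i => pderiv i f

/-- The twisted de Rham cohomology `H^k_f(K)` of a polynomial `f`. -/
abbrev Hf {n : ℕ} {K : Type*} [CommRing K] (f : MvPolynomial (Fin n) K) (k : ℕ) :=
  Htwist (grad f) k

/-- The top form `dx_1 ∧ ⋯ ∧ dx_n`. -/
def topForm (n : ℕ) (K : Type*) [CommRing K] : Form n K :=
  fun s => if s = Finset.univ then 1 else 0


/-- Multiplication of forms by the polynomial `P`, as a linear map. -/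
def mulForm {n : ℕ} {K : Type*} [CommRing K] (P : MvPolynomial (Fin n) K) :
    Form n K →ₗ[K] Form n K where
  toFun ω := fun s => P * ω s
  map_add' ω₁ ω₂ := by funext s; simp [Pi.add_apply, mul_add]
  map_smul' c ω := by funext s; simp [Pi.smul_apply, mul_smul_comm]

/-- The subcomplex `P·Ω + dP∧Ω` of the polynomial de Rham complex. -/
def relSub {n : ℕ} {K : Type*} [CommRing K] (P : MvPolynomial (Fin n) K) :
    Submodule K (Form n K) :=
  LinearMap.range (mulForm P) ⊔ LinearMap.range (wedge1 (grad P))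

/-- Degree-`k` cocycles of the quotient complex `Ω/(P,dP)`: degree-`k` forms
whose de Rham differential lies in `P·Ω + dP∧Ω`. -/
def relZ {n : ℕ} {K : Type*} [CommRing K] (P : MvPolynomial (Fin n) K)
    (k : ℕ) : Submodule K (Form n K) :=
  formDeg n K k ⊓ Submodule.comap (dRham n K) (relSub P)

/-- Degree-`k` coboundaries of the quotient complex `Ω/(P,dP)`. -/
def relB {n : ℕ} {K : Type*} [CommRing K] (P : MvPolynomial (Fin n) K)
    (k : ℕ) : Submodule K (Form n K) :=
  Submodule.map (dRham n K) (formDeg n K (k - 1)) ⊔ relSub P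

/-- The degree-`k` cohomology of the quotient complex `Ω/(P,dP)`, i.e. the
algebraic de Rham cohomology of the affine hypersurface `P = 0`. -/
abbrev relH {n : ℕ} {K : Type*} [CommRing K] (P : MvPolynomial (Fin n) K)
    (k : ℕ) :=
  (relZ P k) ⧸ (Submodule.comap (relZ P k).subtype (relB P k))

/-- The extension `ω̃` of a polynomial form on `K^n` to `K^{n+1}` (the lift
along the projection forgetting the last coordinate `t`). -/
def extForm {n : ℕ} {K : Type*} [CommRing K] (ω : Form n K) : Form (n + 1) K :=
  fun s' => ∑ s : Finset (Fin n),
    if s' = Finset.image Fin.castSucc s then rename Fin.castSucc (ω s) else 0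

/-- The coefficients of the 1-form `dt` on `K^{n+1}` (where `t` is the last
coordinate). -/
def dtForm (n : ℕ) (K : Type*) [CommRing K] :
    Fin (n + 1) → MvPolynomial (Fin (n + 1)) K :=
  fun i => if i = Fin.last n then 1 else 0

/-- The coefficients of the 1-form `dP` lifted to `K^{n+1}`. -/
def liftDP {n : ℕ} {K : Type*} [CommRing K] (P : MvPolynomial (Fin n) K) :
    Fin (n + 1) → MvPolynomial (Fin (n + 1)) K :=
  fun i => Fin.lastCases 0 (fun j => rename Fin.castSucc (pderiv j P)) i

/-- The map `ω ↦ ω̃ ∧ dP ∧ dt` from forms on `K^n` to forms on `K^{n+1}`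
(using `ω ∧ dP ∧ dt = −dt ∧ dP ∧ ω̃`). -/
def thetaMap {n : ℕ} {K : Type*} [CommRing K] (P : MvPolynomial (Fin n) K)
    (ω : Form n K) : Form (n + 1) K :=
  fun s' => -(wedge1 (dtForm n K) (wedge1 (liftDP P) (extForm ω)) s')

/-- The function `f(t,x) = t·P(x)` on `K^{n+1}`. -/
def tP {n : ℕ} {K : Type*} [CommRing K] (P : MvPolynomial (Fin n) K) :
    MvPolynomial (Fin (n + 1)) K :=
  X (Fin.last n) * rename Fin.castSucc P

/-!
The twisted complex of `tP` is the cone of `E = ∂_t + P` acting on `Ω[t]`, where `Ω[t]` carries the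
differential `D = d + t dP ∧`. Smoothness makes `P` a nonzerodivisor, so `E` is injective and
`H_{tP}` is the cohomology of `Ω[t] / E`, with a shift of degree. A relation
`1 = g P + ∑ i, vᵢ ∂ᵢP` gives a contracting homotopy of `dP ∧` modulo `P`; with it the leading
power of `t` in a cocycle of `Ω[t] / E` can be removed, until only a form `dP ∧ ω` without `t` is
left. Such a form vanishes modulo `E` exactly when `ω` lies in `(P, dP)`.
-/

/-! ### Koszul operators -/

section Grading

variable {ι K M N : Type*} [CommRing K] [AddCommGroup M] [Module K M]
  [AddCommGroup N] [Module K N]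

/-- The map on forms applying `f` to every coefficient. -/
abbrev mapCoeff (f : M →ₗ[K] N) : (Finset ι → M) →ₗ[K] (Finset ι → N) :=
  f.compLeft (Finset ι)

variable (ι K M) in
/-- The forms supported on index sets of cardinality `k`. -/
def homogeneousForm (k : ℕ) : Submodule K (Finset ι → M) where
  carrier := {ω | ∀ s : Finset ι, s.card ≠ k → ω s = 0}
  add_mem' hω hη s hs := by rw [Pi.add_apply, hω s hs, hη s hs, add_zero]
  zero_mem' _ _ := rfl
  smul_mem' c ω hω s hs := by rw [Pi.smul_apply, hω s hs, smul_zero]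

variable (K) in
/-- The projection of a form to its component of degree `k`. -/
def homogeneousPart (k : ℕ) : (Finset ι → M) →ₗ[K] (Finset ι → M) where
  toFun ω s := if s.card = k then ω s else 0
  map_add' ω η := by ext s; simp only [Pi.add_apply]; split_ifs <;> simp
  map_smul' c ω := by ext s; simp

theorem homogeneousPart_mem (k : ℕ) (ω : Finset ι → M) :
    homogeneousPart K k ω ∈ homogeneousForm ι K M k :=
  fun _ hs => if_neg hs

theorem homogeneousPart_of_mem {k : ℕ} {ω : Finset ι → M} (hω : ω ∈ homogeneousForm ι K M k) :
    homogeneousPart K k ω = ω := by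
  ext s
  by_cases hs : s.card = k
  · exact if_pos hs
  · exact (if_neg hs).trans (hω s hs).symm

theorem homogeneousPart_mapCoeff (k : ℕ) (f : M →ₗ[K] N) (ω : Finset ι → M) :
    homogeneousPart K k (mapCoeff f ω) = mapCoeff f (homogeneousPart K k ω) := by
  ext s
  simp [homogeneousPart, apply_ite f]

theorem mapCoeff_mem_homogeneousForm {k : ℕ} (f : M →ₗ[K] N) {ω : Finset ι → M}
    (hω : ω ∈ homogeneousForm ι K M k) : mapCoeff f ω ∈ homogeneousForm ι K N k := by
  rw [← homogeneousPart_of_mem hω, ← homogeneousPart_mapCoeff]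
  exact homogeneousPart_mem k _

end Grading

section Koszul

variable {ι K M N L : Type*} [LinearOrder ι] [CommRing K] [AddCommGroup M] [Module K M]
  [AddCommGroup N] [Module K N] [AddCommGroup L] [Module K L]

/-- The sign `(-1)^{#{j ∈ s | j < i}}` picked up by moving `dx_i` to the front of `dx_s`. -/
def koszulSign (s : Finset ι) (i : ι) : ℤ :=
  (-1) ^ (s.filter (· < i)).card

theorem koszulSign_mul_self (s : Finset ι) (i : ι) : koszulSign s i * koszulSign s i = 1 := by
  rw [koszulSign, ← mul_pow, neg_one_mul, neg_neg, one_pow]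

theorem koszulSign_erase_of_not_lt (s : Finset ι) {i j : ι} (h : ¬j < i) :
    koszulSign (s.erase j) i = koszulSign s i := by
  rw [koszulSign, Finset.filter_erase, Finset.erase_eq_of_notMem (by simp [h]), koszulSign]

theorem koszulSign_erase_of_lt {s : Finset ι} {i j : ι} (hj : j ∈ s) (h : j < i) :
    koszulSign (s.erase j) i = -koszulSign s i := by
  rw [koszulSign, koszulSign, Finset.filter_erase,
    ← Finset.card_erase_add_one (Finset.mem_filter.mpr ⟨hj, h⟩), pow_succ, mul_neg_one, neg_neg]

theorem koszulSign_mul_erase {s : Finset ι} {i j : ι} (hi : i ∈ s) (hj : j ∈ s) (hij : i ≠ j) :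
    koszulSign s i * koszulSign (s.erase i) j =
      -(koszulSign s j * koszulSign (s.erase j) i) := by
  rcases lt_or_gt_of_ne hij with h | h
  · rw [koszulSign_erase_of_lt hi h, koszulSign_erase_of_not_lt s h.not_gt]
    ring
  · rw [koszulSign_erase_of_not_lt s h.not_gt, koszulSign_erase_of_lt hj h]
    ring

theorem koszulSign_insert_self (s : Finset ι) (i : ι) :
    koszulSign (insert i s) i = koszulSign s i := by
  rw [koszulSign, Finset.filter_insert, if_neg (lt_irrefl i), koszulSign]

theorem koszulSign_mul_insert {s : Finset ι} {i j : ι} (hi : i ∈ s) (hj : j ∉ s) :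
    koszulSign s i * koszulSign (s.erase i) j =
      -(koszulSign s j * koszulSign (insert j s) i) := by
  have hij : i ≠ j := fun h => hj (h ▸ hi)
  have key := koszulSign_mul_erase (Finset.mem_insert_of_mem hi) (Finset.mem_insert_self j s) hij
  rw [Finset.erase_insert hj, Finset.erase_insert_of_ne hij.symm, koszulSign_insert_self,
    koszulSign_insert_self] at key
  linear_combination
    (koszulSign s i * koszulSign (insert j s) i) * key -
    koszulSign s i * koszulSign (s.erase i) j * koszulSign_mul_self (insert j s) i -
    koszulSign s j * koszulSign (insert j s) i * koszulSign_mul_self s i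

theorem sum_koszulSign_erase_eq_zero (s : Finset ι) {h : ι → ι → M} (symm : ∀ i j, h i j = h j i) :
    ∑ i ∈ s, ∑ j ∈ s.erase i, (koszulSign s i * koszulSign (s.erase i) j) • h i j = 0 := by
  rw [Finset.sum_sigma']
  refine Finset.sum_involution (fun p _ => ⟨p.2, p.1⟩) ?_ ?_ ?_ fun _ _ => rfl
  · rintro ⟨i, j⟩ hij
    simp only [Finset.mem_sigma, Finset.mem_erase] at hij
    obtain ⟨hi, hne, hj⟩ := hij
    rw [koszulSign_mul_erase hi hj hne.symm, symm i j, neg_smul, neg_add_cancel]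
  · rintro ⟨i, j⟩ hij _ heq
    simp only [Finset.mem_sigma, Finset.mem_erase] at hij
    exact hij.2.1 (congrArg Sigma.fst heq)
  · rintro ⟨i, j⟩ hij
    simp only [Finset.mem_sigma, Finset.mem_erase] at hij ⊢
    exact ⟨hij.2.2, hij.2.1.symm, hij.1⟩

/-- The operator `∑_i e_i ∧ T_i` on `M`-valued forms attached to a family of maps `T_i : M → N`.
It is `α ∧ -` when `T_i` is multiplication by `α_i`, and the de Rham differential when `T_i` is
`∂_i`. -/
def koszul (T : ι → M →ₗ[K] N) : (Finset ι → M) →ₗ[K] (Finset ι → N) :=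
  LinearMap.pi fun s => ∑ i ∈ s, koszulSign s i • T i ∘ₗ LinearMap.proj (s.erase i)

theorem koszul_apply (T : ι → M →ₗ[K] N) (ω : Finset ι → M) (s : Finset ι) :
    koszul T ω s = ∑ i ∈ s, koszulSign s i • T i (ω (s.erase i)) := by
  simp [koszul]

theorem koszul_mapCoeff_of_comm {T : ι → M →ₗ[K] M} {T' : ι → N →ₗ[K] N} {f : M →ₗ[K] N}
    (comm : ∀ i x, T' i (f x) = f (T i x)) (ω : Finset ι → M) :
    koszul T' (mapCoeff f ω) = mapCoeff f (koszul T ω) := by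
  ext s
  simp [koszul_apply, comm]

theorem koszul_koszul_apply (S : ι → N →ₗ[K] L) (T : ι → M →ₗ[K] N) (ω : Finset ι → M)
    (s : Finset ι) :
    koszul S (koszul T ω) s = ∑ i ∈ s, ∑ j ∈ s.erase i,
      (koszulSign s i * koszulSign (s.erase i) j) • S i (T j (ω ((s.erase i).erase j))) := by
  simp only [koszul_apply, map_sum, map_zsmul, Finset.smul_sum, mul_smul]

theorem koszul_koszul_eq_zero {T : ι → M →ₗ[K] M} (comm : ∀ i j x, T i (T j x) = T j (T i x))
    (ω : Finset ι → M) : koszul T (koszul T ω) = 0 := by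
  ext s
  rw [koszul_koszul_apply]
  refine sum_koszulSign_erase_eq_zero s fun i j => ?_
  rw [comm, Finset.erase_right_comm]

theorem koszul_koszul_add_koszul_koszul_eq_zero {S T : ι → M →ₗ[K] M}
    (comm : ∀ i j x, S i (T j x) + T i (S j x) = S j (T i x) + T j (S i x)) (ω : Finset ι → M) :
    koszul S (koszul T ω) + koszul T (koszul S ω) = 0 := by
  ext s
  simp only [Pi.add_apply, koszul_koszul_apply, ← Finset.sum_add_distrib, ← smul_add]
  refine sum_koszulSign_erase_eq_zero s fun i j => ?_
  rw [comm, Finset.erase_right_comm]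

/-- The interior product `∑_i v_i ι_{e_i}` on forms attached to a family of maps `v_i : M → N`. -/
def contraction [Fintype ι] (v : ι → M →ₗ[K] N) : (Finset ι → M) →ₗ[K] (Finset ι → N) :=
  LinearMap.pi fun s => ∑ i ∈ sᶜ, koszulSign s i • v i ∘ₗ LinearMap.proj (insert i s)

theorem contraction_apply [Fintype ι] (v : ι → M →ₗ[K] N) (ω : Finset ι → M) (s : Finset ι) :
    contraction v ω s = ∑ i ∈ sᶜ, koszulSign s i • v i (ω (insert i s)) := by
  simp [contraction]

theorem contraction_mapCoeff [Fintype ι] {v : ι → M →ₗ[K] M} {f : M →ₗ[K] M}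
    (comm : ∀ i x, v i (f x) = f (v i x)) (ω : Finset ι → M) :
    contraction v (mapCoeff f ω) = mapCoeff f (contraction v ω) := by
  ext s
  simp [contraction_apply, comm]

theorem koszul_contraction_apply [Fintype ι] (T : ι → N →ₗ[K] L) (v : ι → M →ₗ[K] N)
    (ω : Finset ι → M) (s : Finset ι) :
    koszul T (contraction v ω) s = ∑ i ∈ s, T i (v i (ω s)) +
      ∑ i ∈ s, ∑ j ∈ sᶜ, (koszulSign s i * koszulSign (s.erase i) j) •
        T i (v j (ω (insert j (s.erase i)))) := by
  rw [koszul_apply, ← Finset.sum_add_distrib]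
  refine Finset.sum_congr rfl fun i hi => ?_
  rw [contraction_apply, Finset.compl_erase, Finset.sum_insert (by simpa using hi),
    Finset.insert_erase hi, koszulSign_erase_of_not_lt s (lt_irrefl i)]
  simp only [map_add, map_zsmul, map_sum, smul_add, smul_smul, Finset.smul_sum,
    koszulSign_mul_self, one_smul]

theorem contraction_koszul_apply [Fintype ι] (v : ι → N →ₗ[K] L) (T : ι → M →ₗ[K] N)
    (ω : Finset ι → M) (s : Finset ι) :
    contraction v (koszul T ω) s = ∑ j ∈ sᶜ, v j (T j (ω s)) +
      ∑ j ∈ sᶜ, ∑ i ∈ s, (koszulSign s j * koszulSign (insert j s) i) •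
        v j (T i (ω (insert j (s.erase i)))) := by
  rw [contraction_apply, ← Finset.sum_add_distrib]
  refine Finset.sum_congr rfl fun j hj => ?_
  have hjs : j ∉ s := by simpa using hj
  rw [koszul_apply, Finset.sum_insert hjs, Finset.erase_insert hjs, koszulSign_insert_self]
  simp only [map_add, map_zsmul, map_sum, smul_add, smul_smul, Finset.smul_sum,
    koszulSign_mul_self, one_smul]
  congr 1
  refine Finset.sum_congr rfl fun i hi => ?_
  rw [Finset.erase_insert_of_ne (ne_of_mem_of_not_mem hi hjs).symm]

theorem koszul_contraction_add_contraction_koszul [Fintype ι] {T v : ι → M →ₗ[K] M}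
    (comm : ∀ i j x, v j (T i x) = T i (v j x)) (ω : Finset ι → M) :
    koszul T (contraction v ω) + contraction v (koszul T ω) =
      mapCoeff (∑ i, v i ∘ₗ T i) ω := by
  ext s
  have cross : ∑ i ∈ s, ∑ j ∈ sᶜ, (koszulSign s i * koszulSign (s.erase i) j) •
        T i (v j (ω (insert j (s.erase i)))) =
      -∑ j ∈ sᶜ, ∑ i ∈ s, (koszulSign s j * koszulSign (insert j s) i) •
        v j (T i (ω (insert j (s.erase i)))) := by
    rw [Finset.sum_comm, ← Finset.sum_neg_distrib]
    refine Finset.sum_congr rfl fun j hj => ?_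
    rw [← Finset.sum_neg_distrib]
    refine Finset.sum_congr rfl fun i hi => ?_
    rw [koszulSign_mul_insert hi (by simpa using hj), comm, neg_smul]
  rw [Pi.add_apply, koszul_contraction_apply, contraction_koszul_apply, cross]
  simp only [LinearMap.compLeft_apply, Function.comp_apply, LinearMap.sum_apply,
    LinearMap.comp_apply, comm]
  rw [← Finset.sum_add_sum_compl s]
  abel

theorem homogeneousPart_zero_koszul (T : ι → M →ₗ[K] N) (ω : Finset ι → M) :
    homogeneousPart K 0 (koszul T ω) = 0 := by
  ext s
  rcases s.eq_empty_or_nonempty with rfl | hs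
  · simp [homogeneousPart, koszul_apply]
  · simp [homogeneousPart, hs.ne_empty]

theorem homogeneousPart_succ_koszul (k : ℕ) (T : ι → M →ₗ[K] N) (ω : Finset ι → M) :
    homogeneousPart K (k + 1) (koszul T ω) =
      koszul T (homogeneousPart K k ω) := by
  ext s
  simp only [homogeneousPart, LinearMap.coe_mk, AddHom.coe_mk, koszul_apply, apply_ite (T _),
    map_zero, smul_ite, smul_zero]
  split_ifs with hs
  · refine Finset.sum_congr rfl fun i hi => (if_pos ?_).symm
    rw [Finset.card_erase_of_mem hi, hs, Nat.add_sub_cancel]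
  · refine (Finset.sum_eq_zero fun i hi => if_neg fun h => hs ?_).symm
    rw [← Finset.card_erase_add_one hi, h]

theorem homogeneousPart_koszul_mem_map (k : ℕ) (T : ι → M →ₗ[K] N) (ω : Finset ι → M) :
    homogeneousPart K k (koszul T ω) ∈ (homogeneousForm ι K M (k - 1)).map (koszul T) := by
  rcases k with - | k
  · rw [homogeneousPart_zero_koszul]
    exact zero_mem _
  · rw [homogeneousPart_succ_koszul]
    exact ⟨_, homogeneousPart_mem k ω, rfl⟩

theorem koszul_mem_homogeneousForm {k : ℕ} (T : ι → M →ₗ[K] N) {ω : Finset ι → M}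
    (hω : ω ∈ homogeneousForm ι K M k) : koszul T ω ∈ homogeneousForm ι K N (k + 1) := by
  rw [← homogeneousPart_of_mem hω, ← homogeneousPart_succ_koszul]
  exact homogeneousPart_mem (k + 1) _

theorem mem_map_koszul_homogeneousForm_iff {k : ℕ} {T : ι → M →ₗ[K] N} {ω : Finset ι → N}
    (hω : ω ∈ homogeneousForm ι K N (k + 1)) :
    ω ∈ (homogeneousForm ι K M k).map (koszul T) ↔ ω ∈ LinearMap.range (koszul T) := by
  refine ⟨fun h => LinearMap.map_le_range h, ?_⟩
  rintro ⟨η, rfl⟩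
  refine ⟨_, homogeneousPart_mem k η, ?_⟩
  rw [← homogeneousPart_succ_koszul, homogeneousPart_of_mem hω]

end Koszul

/-! ### Splitting off the last coordinate -/

section LastCoordinate

variable {K M N : Type*} [CommRing K] [AddCommGroup M] [Module K M] [AddCommGroup N] [Module K N]
  {n : ℕ}

variable (K M n) in
/-- The component `a` in the decomposition `θ = a + dt ∧ b`, with `t` the last coordinate. -/
def horizontalPart : (Finset (Fin (n + 1)) → M) →ₗ[K] (Finset (Fin n) → M) :=
  LinearMap.funLeft K M fun s => s.image Fin.castSucc

variable (K M n) in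
/-- The component `b` in the decomposition `θ = a + dt ∧ b`, with `t` the last coordinate. The sign
moves `dt` from the last to the first place. -/
def verticalPart : (Finset (Fin (n + 1)) → M) →ₗ[K] (Finset (Fin n) → M) :=
  LinearMap.pi fun s =>
    (-1 : ℤ) ^ s.card • LinearMap.proj (insert (Fin.last n) (s.image Fin.castSucc))

theorem horizontalPart_apply (θ : Finset (Fin (n + 1)) → M) (s : Finset (Fin n)) :
    horizontalPart K M n θ s = θ (s.image Fin.castSucc) :=
  rfl

theorem verticalPart_apply (θ : Finset (Fin (n + 1)) → M) (s : Finset (Fin n)) :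
    verticalPart K M n θ s =
      (-1 : ℤ) ^ s.card • θ (insert (Fin.last n) (s.image Fin.castSucc)) :=
  rfl

theorem last_notMem_image_castSucc (s : Finset (Fin n)) : Fin.last n ∉ s.image Fin.castSucc := by
  simp [Fin.castSucc_ne_last]

theorem eq_image_castSucc_or_eq_insert_last (s' : Finset (Fin (n + 1))) :
    ∃ s : Finset (Fin n), s' = s.image Fin.castSucc ∨
      s' = insert (Fin.last n) (s.image Fin.castSucc) := by
  have restrict (s' : Finset (Fin (n + 1))) (h : Fin.last n ∉ s') :
      ∃ s : Finset (Fin n), s' = s.image Fin.castSucc := by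
    refine ⟨Finset.univ.filter (Fin.castSucc · ∈ s'), ?_⟩
    ext i
    induction i using Fin.lastCases with
    | last => simp [h, Fin.castSucc_ne_last]
    | cast i => simp
  by_cases h : Fin.last n ∈ s'
  · obtain ⟨s, hs⟩ := restrict (s'.erase (Fin.last n)) (Finset.notMem_erase _ _)
    exact ⟨s, .inr (by rw [← hs, Finset.insert_erase h])⟩
  · obtain ⟨s, hs⟩ := restrict s' h
    exact ⟨s, .inl hs⟩

theorem verticalPart_eq_iff {θ η : Finset (Fin (n + 1)) → M} :
    verticalPart K M n θ = verticalPart K M n η ↔ ∀ s, Fin.last n ∈ s → θ s = η s := by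
  constructor
  · intro h s' hs'
    obtain ⟨s, rfl | rfl⟩ := eq_image_castSucc_or_eq_insert_last s'
    · exact absurd hs' (last_notMem_image_castSucc s)
    · have hs := congrFun h s
      rw [verticalPart_apply, verticalPart_apply] at hs
      exact (IsUnit.pow _ isUnit_one.neg).smul_left_cancel.mp hs
  · intro h
    ext s
    rw [verticalPart_apply, verticalPart_apply, h _ (Finset.mem_insert_self _ _)]

theorem eq_of_horizontalPart_eq_of_verticalPart_eq {θ η : Finset (Fin (n + 1)) → M}
    (hor : horizontalPart K M n θ = horizontalPart K M n η)
    (ver : verticalPart K M n θ = verticalPart K M n η) : θ = η := by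
  ext s'
  obtain ⟨s, rfl | rfl⟩ := eq_image_castSucc_or_eq_insert_last s'
  · exact congrFun hor s
  · exact verticalPart_eq_iff.mp ver _ (Finset.mem_insert_self _ _)

theorem exists_horizontalPart_eq_verticalPart_eq (a b : Finset (Fin n) → M) :
    ∃ θ, horizontalPart K M n θ = a ∧ verticalPart K M n θ = b := by
  have filter_image (s : Finset (Fin n)) :
      Finset.univ.filter (Fin.castSucc · ∈ s.image Fin.castSucc) = s := by
    ext; simp
  have filter_insert (s : Finset (Fin n)) : Finset.univ.filter
      (Fin.castSucc · ∈ insert (Fin.last n) (s.image Fin.castSucc)) = s := by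
    ext; simp [Fin.castSucc_ne_last]
  refine ⟨fun s' => let s := Finset.univ.filter (Fin.castSucc · ∈ s')
    if Fin.last n ∈ s' then (-1 : ℤ) ^ s.card • b s else a s, ?_, ?_⟩
  · ext s
    simp only [horizontalPart_apply, last_notMem_image_castSucc, if_false, filter_image]
  · ext s
    simp only [verticalPart_apply, Finset.mem_insert_self, if_true, filter_insert, smul_smul,
      ← mul_pow, neg_mul_neg, one_mul, one_pow, one_smul]

theorem mem_homogeneousForm_iff {k : ℕ} {θ : Finset (Fin (n + 1)) → M} :
    θ ∈ homogeneousForm (Fin (n + 1)) K M (k + 1) ↔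
      horizontalPart K M n θ ∈ homogeneousForm (Fin n) K M (k + 1) ∧
        verticalPart K M n θ ∈ homogeneousForm (Fin n) K M k := by
  have card_image (s : Finset (Fin n)) : (s.image Fin.castSucc).card = s.card :=
    Finset.card_image_of_injective s (Fin.castSucc_injective n)
  have card_insert (s : Finset (Fin n)) :
      (insert (Fin.last n) (s.image Fin.castSucc)).card = s.card + 1 := by
    rw [Finset.card_insert_of_notMem (last_notMem_image_castSucc s), card_image]
  constructor
  · intro hθ
    refine ⟨fun s hs => hθ _ (by rwa [card_image]), fun s hs => ?_⟩
    rw [verticalPart_apply, hθ _ (by rwa [card_insert, Ne, Nat.add_right_cancel_iff]), smul_zero]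
  · rintro ⟨hor, ver⟩ s' hs'
    obtain ⟨s, rfl | rfl⟩ := eq_image_castSucc_or_eq_insert_last s'
    · exact hor s (by rwa [card_image] at hs')
    · rw [card_insert, Ne, Nat.add_right_cancel_iff] at hs'
      have hs := ver s hs'
      rw [verticalPart_apply] at hs
      exact (IsUnit.pow _ isUnit_one.neg).smul_eq_zero.mp hs

theorem koszulSign_image_castSucc (s : Finset (Fin n)) (i : Fin n) :
    koszulSign (s.image Fin.castSucc) i.castSucc = koszulSign s i := by
  have filter_image : (s.image Fin.castSucc).filter (· < i.castSucc) =
      (s.filter (· < i)).image Fin.castSucc := by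
    simp [Finset.filter_image]
  rw [koszulSign, filter_image, Finset.card_image_of_injective _ (Fin.castSucc_injective n),
    koszulSign]

theorem koszulSign_insert_last (s : Finset (Fin (n + 1))) (i : Fin n) :
    koszulSign (insert (Fin.last n) s) i.castSucc = koszulSign s i.castSucc := by
  rw [koszulSign, Finset.filter_insert, if_neg (Fin.castSucc_lt_last i).not_gt, koszulSign]

theorem koszulSign_image_castSucc_last (s : Finset (Fin n)) :
    koszulSign (s.image Fin.castSucc) (Fin.last n) = (-1) ^ s.card := by
  rw [koszulSign, Finset.filter_true_of_mem (by simp [Fin.castSucc_lt_last]),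
    Finset.card_image_of_injective _ (Fin.castSucc_injective n)]

theorem horizontalPart_koszul (T : Fin (n + 1) → M →ₗ[K] N) (θ : Finset (Fin (n + 1)) → M) :
    horizontalPart K N n (koszul T θ) =
      koszul (fun i => T i.castSucc) (horizontalPart K M n θ) := by
  ext s
  rw [horizontalPart_apply, koszul_apply,
    Finset.sum_image (Fin.castSucc_injective n).injOn, koszul_apply]
  refine Finset.sum_congr rfl fun i _ => ?_
  rw [koszulSign_image_castSucc, horizontalPart_apply,
    Finset.image_erase (Fin.castSucc_injective n)]

theorem verticalPart_koszul (T : Fin (n + 1) → M →ₗ[K] N) (θ : Finset (Fin (n + 1)) → M) :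
    verticalPart K N n (koszul T θ) =
      mapCoeff (T (Fin.last n)) (horizontalPart K M n θ) -
        koszul (fun i => T i.castSucc) (verticalPart K M n θ) := by
  ext s
  have last_notMem := last_notMem_image_castSucc s
  rw [verticalPart_apply, koszul_apply, Finset.sum_insert last_notMem,
    Finset.erase_insert last_notMem, koszulSign_insert_self, koszulSign_image_castSucc_last,
    Finset.sum_image (Fin.castSucc_injective n).injOn, Pi.sub_apply, koszul_apply, smul_add,
    smul_smul, ← mul_pow, neg_mul_neg, one_mul, one_pow, one_smul, sub_eq_add_neg,
    ← Finset.sum_neg_distrib, Finset.smul_sum]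
  congr 1
  refine Finset.sum_congr rfl fun i hi => ?_
  rw [koszulSign_insert_last, koszulSign_image_castSucc, verticalPart_apply,
    Finset.image_erase (Fin.castSucc_injective n),
    Finset.erase_insert_of_ne (Fin.castSucc_ne_last i).symm, map_zsmul, smul_comm,
    ← Finset.card_erase_add_one hi, pow_succ, mul_neg_one, neg_smul, smul_neg]

/-! A closed form `a + dt ∧ b` satisfies `D b = E a`, where `E` is the operator in the last
direction and `D` the Koszul operator of the others. If `E` is injective then `b` determines the
form, and the form is exact if and only if `b` vanishes modulo the images of `D` and `E`. -/

variable {T : Fin (n + 1) → M →ₗ[K] M}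

theorem koszul_eq_zero_iff_of_injective_last (comm : ∀ i j x, T i (T j x) = T j (T i x))
    (inj : Function.Injective (T (Fin.last n))) {θ : Finset (Fin (n + 1)) → M} :
    koszul T θ = 0 ↔ koszul (fun i => T i.castSucc) (verticalPart K M n θ) =
      mapCoeff (T (Fin.last n)) (horizontalPart K M n θ) := by
  constructor
  · intro h
    rw [eq_comm, ← sub_eq_zero, ← verticalPart_koszul, h, map_zero]
  · intro h
    have hor : koszul (fun i => T i.castSucc) (horizontalPart K M n θ) = 0 := by
      refine inj.comp_left ?_
      calc mapCoeff (T (Fin.last n)) (koszul (fun i => T i.castSucc) (horizontalPart K M n θ))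
        _ = koszul (fun i => T i.castSucc)
            (mapCoeff (T (Fin.last n)) (horizontalPart K M n θ)) := by
          rw [koszul_mapCoeff_of_comm fun i => comm _ _]
        _ = 0 := by rw [← h, koszul_koszul_eq_zero fun i j => comm _ _]
        _ = mapCoeff (T (Fin.last n)) 0 := (map_zero _).symm
    apply eq_of_horizontalPart_eq_of_verticalPart_eq (K := K)
    · rw [horizontalPart_koszul, hor, map_zero]
    · rw [verticalPart_koszul, h, sub_self, map_zero]

theorem mem_range_koszul_iff_of_injective_last (comm : ∀ i j x, T i (T j x) = T j (T i x))
    (inj : Function.Injective (T (Fin.last n))) {θ : Finset (Fin (n + 1)) → M}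
    (closed : koszul T θ = 0) :
    θ ∈ LinearMap.range (koszul T) ↔ verticalPart K M n θ ∈
      LinearMap.range (koszul fun i => T i.castSucc) ⊔
        LinearMap.range (mapCoeff (ι := Fin n) (T (Fin.last n))) := by
  rw [Submodule.mem_sup]
  constructor
  · rintro ⟨η, rfl⟩
    refine ⟨_, ⟨-verticalPart K M n η, rfl⟩, _, ⟨horizontalPart K M n η, rfl⟩, ?_⟩
    rw [verticalPart_koszul, map_neg]
    abel
  · rintro ⟨_, ⟨x, rfl⟩, _, ⟨y, rfl⟩, hxy⟩
    obtain ⟨η, hor, ver⟩ := exists_horizontalPart_eq_verticalPart_eq (K := K) y (-x)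
    have ver_sub : verticalPart K M n (θ - koszul T η) = 0 := by
      rw [map_sub, verticalPart_koszul, hor, ver, ← hxy, map_neg]
      abel
    have closed_sub : koszul T (θ - koszul T η) = 0 := by
      rw [map_sub, closed, koszul_koszul_eq_zero comm, sub_zero]
    have hor_sub : horizontalPart K M n (θ - koszul T η) = 0 := by
      rw [koszul_eq_zero_iff_of_injective_last comm inj, ver_sub, map_zero] at closed_sub
      exact inj.comp_left (closed_sub.symm.trans (map_zero (mapCoeff _)).symm)
    refine ⟨η, (sub_eq_zero.mp ?_).symm⟩
    exact eq_of_horizontalPart_eq_of_verticalPart_eq (K := K)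
      (hor_sub.trans (map_zero _).symm) (ver_sub.trans (map_zero _).symm)

theorem exists_koszul_eq_zero_of_injective_last (comm : ∀ i j x, T i (T j x) = T j (T i x))
    (inj : Function.Injective (T (Fin.last n))) {k : ℕ} {b : Finset (Fin n) → M}
    (hb : b ∈ homogeneousForm (Fin n) K M k)
    (closed : koszul (fun i => T i.castSucc) b ∈
      LinearMap.range (mapCoeff (ι := Fin n) (T (Fin.last n)))) :
    ∃ θ ∈ homogeneousForm (Fin (n + 1)) K M (k + 1),
      koszul T θ = 0 ∧ verticalPart K M n θ = b := by
  obtain ⟨a, ha⟩ := closed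
  obtain ⟨θ, hor, ver⟩ :=
    exists_horizontalPart_eq_verticalPart_eq (K := K) (homogeneousPart K (k + 1) a) b
  refine ⟨θ, mem_homogeneousForm_iff.mpr ⟨?_, ver ▸ hb⟩, ?_, ver⟩
  · rw [hor]
    exact homogeneousPart_mem (k + 1) a
  · rw [koszul_eq_zero_iff_of_injective_last comm inj, hor, ver, ← homogeneousPart_mapCoeff, ha,
      homogeneousPart_of_mem (koszul_mem_homogeneousForm _ hb)]

end LastCoordinate

/-! ### Smooth hypersurfaces -/

section Smooth

variable {σ K : Type*} [CommRing K]

theorem coeff_mul_leadingCoeff_eq_zero (m : MonomialOrder σ) {P x : MvPolynomial σ K}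
    (hPx : P * x = 0) {d : σ →₀ ℕ} (hd : ∀ e, m.toSyn d < m.toSyn e → coeff e P • x = 0) :
    coeff d P * m.leadingCoeff x = 0 := by
  classical
  suffices coeff (d + m.degree x) (P * x) = coeff d P * m.leadingCoeff x by
    rw [← this, hPx, coeff_zero]
  rw [coeff_mul]
  refine Finset.sum_eq_single_of_mem (d, m.degree x) (by simp) ?_
  rintro ⟨e, f⟩ hef hne
  rw [Finset.HasAntidiagonal.mem_antidiagonal] at hef
  rcases lt_trichotomy (m.toSyn e) (m.toSyn d) with h | h | h
  · refine mul_eq_zero_of_right _ (m.coeff_eq_zero_of_lt ?_)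
    have hsum := congrArg m.toSyn hef
    rw [map_add, map_add] at hsum
    exact lt_of_add_lt_add_left (hsum ▸ add_lt_add_left h _)
  · obtain rfl := m.toSyn.injective h
    exact absurd (congrArg (Prod.mk e) (add_left_cancel hef)) hne
  · rw [← smul_eq_mul, ← coeff_smul, hd e h, coeff_zero]

/-- **McCoy's theorem** in several variables. -/
theorem exists_smul_eq_zero_of_mul_eq_zero {P x : MvPolynomial σ K} (hx : x ≠ 0)
    (hPx : P * x = 0) : ∃ c : K, c ≠ 0 ∧ c • P = 0 := by
  classical
  obtain ⟨_, _⟩ := exists_wellFoundedLT σ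
  let m : MonomialOrder σ := @MonomialOrder.lex σ (inferInstanceAs (LinearOrder σᵒᵈ))
    (inferInstanceAs (WellFoundedGT σᵒᵈ))
  obtain ⟨x, ⟨hx, hPx⟩, hmin⟩ := WellFounded.has_min
    (InvImage.wf (fun x : MvPolynomial σ K => m.toSyn (m.degree x)) wellFounded_lt)
    {x | x ≠ 0 ∧ P * x = 0} ⟨x, hx, hPx⟩
  have coeff_smul_eq_zero (d : σ →₀ ℕ) : coeff d P • x = 0 := by
    by_contra hd
    obtain ⟨d, hd, hmax⟩ := (P.support.filter fun d => coeff d P • x ≠ 0).exists_max_image m.toSyn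
      ⟨d, by simpa using ⟨fun h => hd (by rw [h, zero_smul]), hd⟩⟩
    have hdx : coeff d P • x ≠ 0 := (Finset.mem_filter.mp hd).2
    have lead : coeff d P * m.leadingCoeff x = 0 :=
      coeff_mul_leadingCoeff_eq_zero m hPx fun e hde => by
        by_contra he
        refine hde.not_ge (hmax e (Finset.mem_filter.mpr ⟨mem_support_iff.mpr fun h => he ?_, he⟩))
        rw [h, zero_smul]
    refine hmin _ ⟨hdx, by rw [mul_smul_comm, hPx, smul_zero]⟩ ?_
    refine lt_of_le_of_ne m.degree_smul_le fun h => hdx ?_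
    rw [← m.leadingCoeff_eq_zero_iff, MonomialOrder.leadingCoeff, m.toSyn.injective h, coeff_smul,
      smul_eq_mul]
    exact lead
  refine ⟨m.leadingCoeff x, m.leadingCoeff_ne_zero_iff.mpr hx, ?_⟩
  ext d
  rw [coeff_smul, smul_eq_mul, mul_comm, MonomialOrder.leadingCoeff, ← smul_eq_mul, ← coeff_smul,
    coeff_smul_eq_zero, coeff_zero, coeff_zero]

theorem mem_nonZeroDivisors_of_span_pderiv_eq_top {P : MvPolynomial σ K}
    (smooth : Ideal.span ({P} ∪ Set.range fun i => pderiv i P) = ⊤) :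
    P ∈ nonZeroDivisors (MvPolynomial σ K) := by
  rw [mem_nonZeroDivisors_iff]
  suffices ∀ x, P * x = 0 → x = 0 from ⟨this, fun x hx => this x (mul_comm x P ▸ hx)⟩
  intro x hPx
  by_contra hx
  obtain ⟨c, hc, hcP⟩ := exists_smul_eq_zero_of_mul_eq_zero hx hPx
  have annihilates : C c ∈ (Ideal.span ({P} ∪ Set.range fun i => pderiv i P)).annihilator := by
    rw [Ideal.span, Submodule.mem_annihilator_span]
    rintro ⟨_, rfl | ⟨i, rfl⟩⟩
    · rw [smul_eq_mul, C_mul', hcP]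
    · rw [smul_eq_mul, ← pderiv_C_mul, C_mul', hcP, map_zero]
  rw [smooth, Submodule.mem_annihilator] at annihilates
  have hc1 := annihilates 1 Submodule.mem_top
  rw [smul_eq_mul, mul_one, C_eq_zero] at hc1
  exact hc hc1

end Smooth

/-! ### The operators of the twisted de Rham complex -/

section DeRham

variable {K : Type*} [CommRing K] {n : ℕ}

theorem sgn_mul_eq_koszulSign_smul (s : Finset (Fin n)) (i : Fin n) (q : MvPolynomial (Fin n) K) :
    sgn K s i * q = koszulSign s i • q := by
  simp [sgn, koszulSign, zsmul_eq_mul]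

/-- The twisted partial derivative `∂_i + α_i`. -/
def twistedDeriv (α : Fin n → MvPolynomial (Fin n) K) (i : Fin n) :
    MvPolynomial (Fin n) K →ₗ[K] MvPolynomial (Fin n) K :=
  (pderiv i).toLinearMap + LinearMap.mulLeft K (α i)

theorem twistedDeriv_apply (α : Fin n → MvPolynomial (Fin n) K) (i : Fin n)
    (q : MvPolynomial (Fin n) K) : twistedDeriv α i q = pderiv i q + α i * q :=
  rfl

theorem dTwist_eq_koszul (α : Fin n → MvPolynomial (Fin n) K) :
    dTwist α = koszul (twistedDeriv α) := by
  refine LinearMap.ext fun ω => funext fun s => ?_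
  simp only [dTwist, LinearMap.coe_mk, AddHom.coe_mk, koszul_apply, sgn_mul_eq_koszulSign_smul,
    twistedDeriv_apply]

theorem dRham_eq_koszul : dRham n K = koszul fun i => (pderiv i).toLinearMap := by
  rw [dRham, dTwist_eq_koszul]
  refine congrArg koszul (funext fun i => LinearMap.ext fun q => ?_)
  simp [twistedDeriv_apply]

theorem wedge1_eq_koszul (α : Fin n → MvPolynomial (Fin n) K) :
    wedge1 α = koszul fun i => LinearMap.mulLeft K (α i) := by
  refine LinearMap.ext fun ω => funext fun s => ?_
  simp only [wedge1, LinearMap.coe_mk, AddHom.coe_mk, koszul_apply, sgn_mul_eq_koszulSign_smul,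
    LinearMap.mulLeft_apply]

theorem mulForm_eq_mapCoeff (P : MvPolynomial (Fin n) K) :
    mulForm P = mapCoeff (LinearMap.mulLeft K P) :=
  rfl

theorem pderiv_pderiv_comm {σ : Type*} (i j : σ) (q : MvPolynomial σ K) :
    pderiv i (pderiv j q) = pderiv j (pderiv i q) := by
  classical
  have commutator_eq_zero : ⁅(pderiv i : Derivation K (MvPolynomial σ K) (MvPolynomial σ K)),
      (pderiv j : Derivation K (MvPolynomial σ K) (MvPolynomial σ K))⁆ = 0 :=
    derivation_ext fun k => by
      simp [Derivation.commutator_apply, pderiv_X, Pi.single_apply, apply_ite]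
  rw [← sub_eq_zero, ← Derivation.commutator_apply, commutator_eq_zero, Derivation.zero_apply]

theorem twistedDeriv_grad_comm (f : MvPolynomial (Fin n) K) (i j : Fin n)
    (q : MvPolynomial (Fin n) K) :
    twistedDeriv (grad f) i (twistedDeriv (grad f) j q) =
      twistedDeriv (grad f) j (twistedDeriv (grad f) i q) := by
  simp only [twistedDeriv_apply, grad, map_add, pderiv_mul, pderiv_pderiv_comm i j]
  ring

theorem wedge1_wedge1 (α : Fin n → MvPolynomial (Fin n) K) (ω : Form n K) :
    wedge1 α (wedge1 α ω) = 0 := by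
  rw [wedge1_eq_koszul]
  exact koszul_koszul_eq_zero (fun i j q => mul_left_comm (α i) (α j) q) ω

theorem dRham_wedge1_grad (f : MvPolynomial (Fin n) K) (ω : Form n K) :
    dRham n K (wedge1 (grad f) ω) = -wedge1 (grad f) (dRham n K ω) := by
  rw [eq_neg_iff_add_eq_zero, wedge1_eq_koszul, dRham_eq_koszul]
  refine koszul_koszul_add_koszul_koszul_eq_zero (fun i j q => ?_) ω
  simp only [LinearMap.mulLeft_apply, grad, Derivation.coeFn_coe, pderiv_mul,
    pderiv_pderiv_comm i j]
  ring

theorem wedge1_mulForm (α : Fin n → MvPolynomial (Fin n) K) (P : MvPolynomial (Fin n) K)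
    (ω : Form n K) : wedge1 α (mulForm P ω) = mulForm P (wedge1 α ω) := by
  rw [wedge1_eq_koszul]
  exact koszul_mapCoeff_of_comm (f := LinearMap.mulLeft K P)
    (fun i q => mul_left_comm (α i) P q) ω

/-- The interior product with the vector field `Σ_i v_i ∂_i`. -/
def interiorProduct (v : Fin n → MvPolynomial (Fin n) K) : Form n K →ₗ[K] Form n K :=
  contraction fun i => LinearMap.mulLeft K (v i)

theorem interiorProduct_mulForm (v : Fin n → MvPolynomial (Fin n) K)
    (P : MvPolynomial (Fin n) K) (ω : Form n K) :
    interiorProduct v (mulForm P ω) = mulForm P (interiorProduct v ω) :=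
  contraction_mapCoeff (f := LinearMap.mulLeft K P) (fun i q => mul_left_comm (v i) P q) ω

theorem wedge1_interiorProduct_add_interiorProduct_wedge1 (α v : Fin n → MvPolynomial (Fin n) K)
    (ω : Form n K) :
    wedge1 α (interiorProduct v ω) + interiorProduct v (wedge1 α ω) =
      mulForm (∑ i, v i * α i) ω := by
  rw [wedge1_eq_koszul, interiorProduct,
    koszul_contraction_add_contraction_koszul fun i j q => mul_left_comm (v j) (α i) q]
  ext1 s
  simp [mulForm, Finset.sum_mul, mul_assoc]

theorem exists_mul_add_sum_pderiv_eq_one {P : MvPolynomial (Fin n) K}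
    (smooth : Ideal.span ({P} ∪ Set.range fun i => pderiv i P) = ⊤) :
    ∃ (g : MvPolynomial (Fin n) K) (v : Fin n → MvPolynomial (Fin n) K),
      g * P + ∑ i, v i * pderiv i P = 1 := by
  have one_mem := (Ideal.eq_top_iff_one _).mp smooth
  rw [Ideal.span_union, Submodule.mem_sup] at one_mem
  obtain ⟨_, hx, _, hy, hxy⟩ := one_mem
  obtain ⟨g, rfl⟩ := Ideal.mem_span_singleton'.mp hx
  obtain ⟨v, rfl⟩ := (Submodule.mem_span_range_iff_exists_fun _).mp hy
  exact ⟨g, v, hxy⟩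

/-- On a smooth hypersurface the Koszul complex of `dP` is exact, the contraction by a vector field
`v` with `v(P) ≡ 1 mod P` being a homotopy. -/
theorem exists_eq_wedge1_add_mulForm {P : MvPolynomial (Fin n) K}
    (smooth : Ideal.span ({P} ∪ Set.range fun i => pderiv i P) = ⊤) {ω η : Form n K}
    (h : wedge1 (grad P) ω = mulForm P η) :
    ∃ u z : Form n K, ω = wedge1 (grad P) u + mulForm P z := by
  obtain ⟨g, v, hgv⟩ := exists_mul_add_sum_pderiv_eq_one smooth
  refine ⟨interiorProduct v ω, interiorProduct v η + mulForm g ω, ?_⟩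
  have cartan := wedge1_interiorProduct_add_interiorProduct_wedge1 (grad P) v ω
  rw [h, interiorProduct_mulForm] at cartan
  rw [map_add, ← add_assoc, cartan]
  ext1 s
  change ω s = (∑ i, v i * pderiv i P) * ω s + P * (g * ω s)
  linear_combination -ω s * hgv

theorem mem_relSub_of_wedge1_eq_mulForm {P : MvPolynomial (Fin n) K}
    (smooth : Ideal.span ({P} ∪ Set.range fun i => pderiv i P) = ⊤) {ω η : Form n K}
    (h : wedge1 (grad P) ω = mulForm P η) : ω ∈ relSub P := by
  obtain ⟨u, z, rfl⟩ := exists_eq_wedge1_add_mulForm smooth h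
  exact add_mem (Submodule.mem_sup_right ⟨u, rfl⟩) (Submodule.mem_sup_left ⟨z, rfl⟩)

end DeRham

/-! ### Expansion in powers of the last coordinate -/

section LastVariable

variable {K : Type*} [CommRing K] {n : ℕ}

variable (K n) in
/-- Polynomials in `n + 1` variables as polynomials in the last variable. -/
def lastVariableEquiv :
    MvPolynomial (Fin (n + 1)) K ≃ₐ[K] Polynomial (MvPolynomial (Fin n) K) :=
  (renameEquiv K finSuccEquivLast).trans (optionEquivLeft K (Fin n))

theorem lastVariableEquiv_X_last : lastVariableEquiv K n (X (Fin.last n)) = Polynomial.X := by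
  simp [lastVariableEquiv, optionEquivLeft_X_none]

theorem lastVariableEquiv_rename_castSucc (q : MvPolynomial (Fin n) K) :
    lastVariableEquiv K n (rename Fin.castSucc q) = Polynomial.C q := by
  induction q using MvPolynomial.induction_on with
  | C r => simp [lastVariableEquiv, optionEquivLeft_C]
  | add p q hp hq => rw [map_add, map_add, hp, hq, map_add]
  | mul_X p i hp =>
    rw [map_mul, map_mul, hp, map_mul]
    simp [lastVariableEquiv, optionEquivLeft_X_some]

variable (K n) in
/-- The map `q ↦ t ^ j * q`, with `t` the last variable. -/
def tMonomial (j : ℕ) : MvPolynomial (Fin n) K →ₗ[K] MvPolynomial (Fin (n + 1)) K :=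
  LinearMap.mulLeft K (X (Fin.last n) ^ j) ∘ₗ (rename Fin.castSucc).toLinearMap

variable (K n) in
/-- The coefficient of `t ^ j`, with `t` the last variable. -/
def tCoeff (j : ℕ) : MvPolynomial (Fin (n + 1)) K →ₗ[K] MvPolynomial (Fin n) K :=
  (Polynomial.lcoeff (MvPolynomial (Fin n) K) j).restrictScalars K ∘ₗ
    (lastVariableEquiv K n).toLinearMap

theorem tMonomial_apply (j : ℕ) (q : MvPolynomial (Fin n) K) :
    tMonomial K n j q = X (Fin.last n) ^ j * rename Fin.castSucc q :=
  rfl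

theorem tCoeff_apply (j : ℕ) (f : MvPolynomial (Fin (n + 1)) K) :
    tCoeff K n j f = (lastVariableEquiv K n f).coeff j :=
  rfl

theorem lastVariableEquiv_tMonomial (j : ℕ) (q : MvPolynomial (Fin n) K) :
    lastVariableEquiv K n (tMonomial K n j q) = Polynomial.monomial j q := by
  rw [tMonomial_apply, map_mul, map_pow, lastVariableEquiv_X_last,
    lastVariableEquiv_rename_castSucc, Polynomial.X_pow_mul, Polynomial.C_mul_X_pow_eq_monomial]

theorem tCoeff_tMonomial (i j : ℕ) (q : MvPolynomial (Fin n) K) :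
    tCoeff K n j (tMonomial K n i q) = if i = j then q else 0 := by
  rw [tCoeff_apply, lastVariableEquiv_tMonomial, Polynomial.coeff_monomial]

theorem induction_on_tMonomial {p : MvPolynomial (Fin (n + 1)) K → Prop}
    (f : MvPolynomial (Fin (n + 1)) K) (add : ∀ f g, p f → p g → p (f + g))
    (monomial : ∀ j q, p (tMonomial K n j q)) : p f := by
  obtain ⟨f, rfl⟩ := (lastVariableEquiv K n).symm.surjective f
  induction f using Polynomial.induction_on' with
  | add f g hf hg => rw [map_add]; exact add _ _ hf hg
  | monomial j q =>
    rw [← lastVariableEquiv_tMonomial, AlgEquiv.symm_apply_apply]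
    exact monomial j q

theorem eq_zero_of_tCoeff_eq_zero {f : MvPolynomial (Fin (n + 1)) K}
    (h : ∀ j, tCoeff K n j f = 0) : f = 0 :=
  (map_eq_zero_iff _ (lastVariableEquiv K n).injective).mp (Polynomial.ext h)

theorem exists_tCoeff_eq_zero_of_ge (f : MvPolynomial (Fin (n + 1)) K) :
    ∃ N, ∀ j ≥ N, tCoeff K n j f = 0 :=
  ⟨(lastVariableEquiv K n f).natDegree + 1, fun _ hj =>
    Polynomial.coeff_eq_zero_of_natDegree_lt hj⟩

theorem pderiv_castSucc_tMonomial (i : Fin n) (j : ℕ) (q : MvPolynomial (Fin n) K) :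
    pderiv i.castSucc (tMonomial K n j q) = tMonomial K n j (pderiv i q) := by
  simp only [tMonomial_apply, pderiv_mul, pderiv_pow, pderiv_X_of_ne (Fin.castSucc_ne_last i).symm,
    pderiv_rename (Fin.castSucc_injective n), mul_zero, zero_mul, zero_add]

theorem pderiv_last_rename_castSucc (q : MvPolynomial (Fin n) K) :
    pderiv (Fin.last n) (rename Fin.castSucc q) = 0 := by
  induction q using MvPolynomial.induction_on with
  | C r => rw [rename_C, pderiv_C]
  | add p q hp hq => rw [map_add, map_add, hp, hq, add_zero]
  | mul_X p i hp =>
    rw [map_mul, pderiv_mul, hp, rename_X, pderiv_X_of_ne (Fin.castSucc_ne_last i), zero_mul,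
      mul_zero, add_zero]

theorem pderiv_last_tMonomial (j : ℕ) (q : MvPolynomial (Fin n) K) :
    pderiv (Fin.last n) (tMonomial K n j q) = j • tMonomial K n (j - 1) q := by
  simp only [tMonomial_apply, pderiv_mul, pderiv_pow, pderiv_X_self, pderiv_last_rename_castSucc,
    mul_one, mul_zero, add_zero, nsmul_eq_mul, mul_assoc]

variable (P : MvPolynomial (Fin n) K)

theorem tP_eq_tMonomial : tP P = tMonomial K n 1 P := by
  rw [tP, tMonomial_apply, pow_one]

theorem twistedDeriv_castSucc_tMonomial (i : Fin n) (j : ℕ) (q : MvPolynomial (Fin n) K) :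
    twistedDeriv (grad (tP P)) i.castSucc (tMonomial K n j q) =
      tMonomial K n j (pderiv i q) + tMonomial K n (j + 1) (pderiv i P * q) := by
  rw [twistedDeriv_apply, grad, tP_eq_tMonomial, pderiv_castSucc_tMonomial,
    pderiv_castSucc_tMonomial]
  simp only [tMonomial_apply, map_mul]
  ring

theorem twistedDeriv_last_tMonomial (j : ℕ) (q : MvPolynomial (Fin n) K) :
    twistedDeriv (grad (tP P)) (Fin.last n) (tMonomial K n j q) =
      j • tMonomial K n (j - 1) q + tMonomial K n j (P * q) := by
  rw [twistedDeriv_apply, grad, tP_eq_tMonomial, pderiv_last_tMonomial, pderiv_last_tMonomial]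
  simp only [tMonomial_apply, map_mul, one_smul, Nat.sub_self, pow_zero]
  ring

theorem tCoeff_succ_twistedDeriv_castSucc (i : Fin n) (j : ℕ)
    (f : MvPolynomial (Fin (n + 1)) K) :
    tCoeff K n (j + 1) (twistedDeriv (grad (tP P)) i.castSucc f) =
      pderiv i (tCoeff K n (j + 1) f) + pderiv i P * tCoeff K n j f := by
  induction f using induction_on_tMonomial with
  | add f g hf hg => simp only [map_add, hf, hg, mul_add]; abel
  | monomial l q =>
    simp [twistedDeriv_castSucc_tMonomial, tCoeff_tMonomial, apply_ite (pderiv i)]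

theorem tCoeff_twistedDeriv_last (j : ℕ) (f : MvPolynomial (Fin (n + 1)) K) :
    tCoeff K n j (twistedDeriv (grad (tP P)) (Fin.last n) f) =
      (j + 1) • tCoeff K n (j + 1) f + P * tCoeff K n j f := by
  induction f using induction_on_tMonomial with
  | add f g hf hg => simp only [map_add, hf, hg, mul_add, smul_add]; abel
  | monomial l q =>
    rw [twistedDeriv_last_tMonomial, map_add, map_nsmul]
    simp only [tCoeff_tMonomial, mul_ite, mul_zero]
    congr 1
    rcases l with - | l
    · simp
    · simp only [Nat.add_sub_cancel, Nat.add_right_cancel_iff]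
      split_ifs with h <;> simp [h]

variable {P}

theorem tCoeff_eq_zero_of_tCoeff_twistedDeriv_last_eq_zero
    (hP : P ∈ nonZeroDivisors (MvPolynomial (Fin n) K)) {f : MvPolynomial (Fin (n + 1)) K} {N : ℕ}
    (h : ∀ j ≥ N, tCoeff K n j (twistedDeriv (grad (tP P)) (Fin.last n) f) = 0) :
    ∀ j ≥ N, tCoeff K n j f = 0 := by
  obtain ⟨B, hB⟩ := exists_tCoeff_eq_zero_of_ge f
  suffices ∀ m j, N ≤ j → B ≤ j + m → tCoeff K n j f = 0 from
    fun j hj => this B j hj (Nat.le_add_left B j)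
  intro m
  induction m with
  | zero => exact fun j _ hj => hB j hj
  | succ m ih =>
    intro j hN hj
    have hjm := h j hN
    rw [tCoeff_twistedDeriv_last, ih (j + 1) (by lia) (by lia), smul_zero, zero_add] at hjm
    exact (mul_left_mem_nonZeroDivisors_eq_zero_iff hP).mp hjm

theorem twistedDeriv_last_injective (hP : P ∈ nonZeroDivisors (MvPolynomial (Fin n) K)) :
    Function.Injective (twistedDeriv (grad (tP P)) (Fin.last n)) := by
  rw [injective_iff_map_eq_zero]
  intro f hf
  refine eq_zero_of_tCoeff_eq_zero fun j => ?_
  refine tCoeff_eq_zero_of_tCoeff_twistedDeriv_last_eq_zero hP (N := 0) (fun i _ => ?_) j j.zero_le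
  rw [hf, map_zero]

end LastVariable

/-! ### The complex `Ω[t]` -/

section PolynomialForms

variable {K : Type*} [CommRing K] {n : ℕ}

variable (K n) in
/-- The forms `Ω[t]` on `K^n` with coefficients polynomial in an additional parameter `t`, the
last variable. -/
abbrev PolyForm :=
  Finset (Fin n) → MvPolynomial (Fin (n + 1)) K

variable (K n) in
/-- The map `ω ↦ t ^ j ω` from `Ω` to `Ω[t]`. -/
def formMonomial (j : ℕ) : Form n K →ₗ[K] PolyForm K n :=
  mapCoeff (tMonomial K n j)

variable (K n) in
/-- The coefficient of `t ^ j` of a form in `Ω[t]`. -/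
def formCoeff (j : ℕ) : PolyForm K n →ₗ[K] Form n K :=
  mapCoeff (tCoeff K n j)

/-- The differential `d + t dP ∧` on `Ω[t]`, the part of `d_{tP}` in the directions other than
`t`. -/
def relDiff (P : MvPolynomial (Fin n) K) : PolyForm K n →ₗ[K] PolyForm K n :=
  koszul fun i : Fin n => twistedDeriv (grad (tP P)) i.castSucc

/-- The operator `∂_t + P` on `Ω[t]`, the part of `d_{tP}` in the direction of `t`. -/
def tDiff (P : MvPolynomial (Fin n) K) : PolyForm K n →ₗ[K] PolyForm K n :=
  mapCoeff (twistedDeriv (grad (tP P)) (Fin.last n))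

theorem formMonomial_apply (j : ℕ) (ω : Form n K) (s : Finset (Fin n)) :
    formMonomial K n j ω s = tMonomial K n j (ω s) :=
  rfl

theorem formCoeff_apply (j : ℕ) (b : PolyForm K n) (s : Finset (Fin n)) :
    formCoeff K n j b s = tCoeff K n j (b s) :=
  rfl

theorem tDiff_apply (P : MvPolynomial (Fin n) K) (a : PolyForm K n) (s : Finset (Fin n)) :
    tDiff P a s = twistedDeriv (grad (tP P)) (Fin.last n) (a s) :=
  rfl

theorem formCoeff_formMonomial (i j : ℕ) (ω : Form n K) :
    formCoeff K n j (formMonomial K n i ω) = if i = j then ω else 0 := by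
  ext1 s
  rw [ite_apply, formCoeff_apply, formMonomial_apply, tCoeff_tMonomial, Pi.zero_apply]

theorem eq_zero_of_formCoeff_eq_zero {b : PolyForm K n} (h : ∀ j, formCoeff K n j b = 0) :
    b = 0 := by
  ext1 s
  refine eq_zero_of_tCoeff_eq_zero fun j => ?_
  rw [← formCoeff_apply, h, Pi.zero_apply]

theorem exists_formCoeff_eq_zero_of_ge (b : PolyForm K n) :
    ∃ N, ∀ j ≥ N, formCoeff K n j b = 0 := by
  choose N hN using fun s => exists_tCoeff_eq_zero_of_ge (b s)
  refine ⟨Finset.univ.sup N, fun j hj => funext fun s => ?_⟩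
  rw [formCoeff_apply, hN s j ((Finset.le_sup (Finset.mem_univ s)).trans hj), Pi.zero_apply]

variable (P : MvPolynomial (Fin n) K)

theorem relDiff_formMonomial (j : ℕ) (ω : Form n K) :
    relDiff P (formMonomial K n j ω) =
      formMonomial K n j (dRham n K ω) + formMonomial K n (j + 1) (wedge1 (grad P) ω) := by
  rw [dRham_eq_koszul, wedge1_eq_koszul]
  ext1 s
  simp only [relDiff, koszul_apply, Pi.add_apply, formMonomial_apply,
    twistedDeriv_castSucc_tMonomial, smul_add, Finset.sum_add_distrib, map_sum, map_zsmul]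
  rfl

theorem tDiff_formMonomial (j : ℕ) (ω : Form n K) :
    tDiff P (formMonomial K n j ω) =
      j • formMonomial K n (j - 1) ω + formMonomial K n j (mulForm P ω) :=
  funext fun s => twistedDeriv_last_tMonomial P j (ω s)

theorem formCoeff_succ_relDiff (j : ℕ) (b : PolyForm K n) :
    formCoeff K n (j + 1) (relDiff P b) =
      dRham n K (formCoeff K n (j + 1) b) + wedge1 (grad P) (formCoeff K n j b) := by
  rw [dRham_eq_koszul, wedge1_eq_koszul]
  ext1 s
  simp only [relDiff, koszul_apply, Pi.add_apply, formCoeff_apply,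
    tCoeff_succ_twistedDeriv_castSucc, smul_add, Finset.sum_add_distrib, map_sum, map_zsmul]
  rfl

theorem formCoeff_tDiff (j : ℕ) (a : PolyForm K n) :
    formCoeff K n j (tDiff P a) =
      (j + 1) • formCoeff K n (j + 1) a + mulForm P (formCoeff K n j a) :=
  funext fun s => tCoeff_twistedDeriv_last P j (a s)

theorem relDiff_relDiff (b : PolyForm K n) : relDiff P (relDiff P b) = 0 :=
  koszul_koszul_eq_zero (fun _ _ => twistedDeriv_grad_comm _ _ _) b

theorem relDiff_tDiff (b : PolyForm K n) : relDiff P (tDiff P b) = tDiff P (relDiff P b) :=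
  koszul_mapCoeff_of_comm (fun _ => twistedDeriv_grad_comm _ _ _) b

variable {P}

theorem formCoeff_eq_zero_of_formCoeff_tDiff_eq_zero
    (hP : P ∈ nonZeroDivisors (MvPolynomial (Fin n) K)) {a : PolyForm K n} {N : ℕ}
    (h : ∀ j ≥ N, formCoeff K n j (tDiff P a) = 0) : ∀ j ≥ N, formCoeff K n j a = 0 := by
  intro j hj
  ext1 s
  refine tCoeff_eq_zero_of_tCoeff_twistedDeriv_last_eq_zero hP (fun i hi => ?_) j hj
  rw [← tDiff_apply, ← formCoeff_apply, h i hi, Pi.zero_apply]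

theorem mem_relSub_of_formMonomial_zero_wedge1_mem_range_tDiff
    (smooth : Ideal.span ({P} ∪ Set.range fun i => pderiv i P) = ⊤) {x : Form n K}
    (h : formMonomial K n 0 (wedge1 (grad P) x) ∈ LinearMap.range (tDiff P)) : x ∈ relSub P := by
  obtain ⟨a, ha⟩ := h
  have coeff_eq_zero : ∀ j ≥ 1, formCoeff K n j a = 0 :=
    formCoeff_eq_zero_of_formCoeff_tDiff_eq_zero (mem_nonZeroDivisors_of_span_pderiv_eq_top smooth)
      fun j hj => by rw [ha, formCoeff_formMonomial, if_neg (by lia)]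
  refine mem_relSub_of_wedge1_eq_mulForm smooth (η := formCoeff K n 0 a) ?_
  have ha0 := formCoeff_tDiff P 0 a
  rwa [ha, formCoeff_formMonomial, if_pos rfl, coeff_eq_zero 1 le_rfl, smul_zero, zero_add] at ha0

theorem exists_formCoeff_eq_wedge1_add_mulForm
    (smooth : Ideal.span ({P} ∪ Set.range fun i => pderiv i P) = ⊤) {N : ℕ} {a b : PolyForm K n}
    {x : Form n K} (hb : ∀ j ≥ N + 1, formCoeff K n j b = 0)
    (h : relDiff P b = tDiff P a + formMonomial K n 0 (wedge1 (grad P) x)) :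
    ∃ u z : Form n K, formCoeff K n N b = wedge1 (grad P) u + mulForm P z := by
  have coeff_tDiff (j : ℕ) : formCoeff K n (j + 1) (tDiff P a) =
      dRham n K (formCoeff K n (j + 1) b) + wedge1 (grad P) (formCoeff K n j b) := by
    rw [← formCoeff_succ_relDiff, h, map_add, formCoeff_formMonomial, if_neg j.succ_ne_zero.symm,
      add_zero]
  have ha : ∀ j ≥ N + 2, formCoeff K n j a = 0 := by
    refine formCoeff_eq_zero_of_formCoeff_tDiff_eq_zero
      (mem_nonZeroDivisors_of_span_pderiv_eq_top smooth) fun j hj => ?_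
    obtain ⟨j, rfl⟩ := Nat.exists_eq_add_of_le' (Nat.one_le_of_lt hj)
    rw [coeff_tDiff, hb (j + 1) (by lia), hb j (by lia), map_zero, map_zero, add_zero]
  have key := coeff_tDiff N
  rw [formCoeff_tDiff, ha (N + 2) le_rfl, hb (N + 1) le_rfl, smul_zero, zero_add, map_zero,
    zero_add] at key
  exact exists_eq_wedge1_add_mulForm smooth key.symm

theorem exists_eq_of_relDiff_eq (smooth : Ideal.span ({P} ∪ Set.range fun i => pderiv i P) = ⊤)
    {a b : PolyForm K n} {x : Form n K}
    (h : relDiff P b = tDiff P a + formMonomial K n 0 (wedge1 (grad P) x)) :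
    ∃ (η : Form n K) (c e : PolyForm K n),
      b = formMonomial K n 0 (wedge1 (grad P) η) + relDiff P c + tDiff P e := by
  obtain ⟨N, hb⟩ := exists_formCoeff_eq_zero_of_ge b
  induction N generalizing a b with
  | zero =>
    refine ⟨0, 0, 0, ?_⟩
    rw [eq_zero_of_formCoeff_eq_zero fun j => hb j j.zero_le]
    simp only [map_zero, add_zero]
  | succ N ih =>
    obtain ⟨u, z, huz⟩ := exists_formCoeff_eq_wedge1_add_mulForm smooth hb h
    rcases N with - | N
    · refine ⟨u, 0, formMonomial K n 0 z, ?_⟩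
      rw [← sub_eq_zero]
      refine eq_zero_of_formCoeff_eq_zero fun j => ?_
      rcases j with - | j
      · simp [tDiff_formMonomial, formCoeff_formMonomial, huz]
      · simp [tDiff_formMonomial, formCoeff_formMonomial, hb]
    · let c := formMonomial K n N u
      let e := formMonomial K n (N + 1) z
      obtain ⟨η, c', e', hη⟩ := ih (a := a - relDiff P e) (b := b - relDiff P c - tDiff P e)
        (by rw [map_sub, map_sub, map_sub, relDiff_relDiff, relDiff_tDiff, h]; abel)
        fun j hj => by
          simp only [c, e, map_sub, tDiff_formMonomial, relDiff_formMonomial, map_add, map_nsmul,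
            formCoeff_formMonomial]
          rcases hj.eq_or_lt with rfl | hj
          · simp [huz]
          · simp [hj.ne, hb j hj, (Nat.lt_of_succ_lt hj).ne]
      refine ⟨η, c' + c, e' + e, ?_⟩
      rw [sub_sub, sub_eq_iff_eq_add] at hη
      rw [hη, map_add, map_add]
      abel

end PolynomialForms

/-! ### Comparison of the cohomologies -/

theorem exists_subquotient_linearEquiv {R V W : Type*} [Ring R] [AddCommGroup V] [Module R V]
    [AddCommGroup W] [Module R W] {f : V →ₗ[R] W} {Z B : Submodule R V} {Z' B' : Submodule R W}
    (mapsTo : ∀ x ∈ Z, f x ∈ Z') (mem_iff : ∀ x ∈ Z, f x ∈ B' ↔ x ∈ B)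
    (surj : ∀ y ∈ Z', ∃ x ∈ Z, y - f x ∈ B') :
    ∃ e : (Z ⧸ B.comap Z.subtype) ≃ₗ[R] (Z' ⧸ B'.comap Z'.subtype),
      ∀ (x : Z) (y : Z'), f x = y → e (Submodule.Quotient.mk x) = Submodule.Quotient.mk y := by
  let g := (B'.comap Z'.subtype).mkQ ∘ₗ f.restrict mapsTo
  have ker_eq : LinearMap.ker g = B.comap Z.subtype := by
    rw [LinearMap.ker_comp, Submodule.ker_mkQ]
    ext x
    exact mem_iff x x.2
  have range_eq : LinearMap.range g = ⊤ := by
    rw [LinearMap.range_eq_top]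
    intro y
    obtain ⟨y, rfl⟩ := Submodule.mkQ_surjective _ y
    obtain ⟨x, hx, hxy⟩ := surj y y.2
    exact ⟨⟨x, hx⟩, .symm <| (Submodule.Quotient.eq (B'.comap Z'.subtype)).mpr hxy⟩
  refine ⟨Submodule.quotEquivOfEq _ _ ker_eq.symm ≪≫ₗ
    g.quotKerEquivOfSurjective (LinearMap.range_eq_top.mp range_eq), ?_⟩
  rintro x ⟨_, hy⟩ rfl
  rfl

section Comparison

variable {K : Type*} [CommRing K] {n : ℕ} {P : MvPolynomial (Fin n) K}

variable (P) in
/-- The cocycles of degree `k` of the complex `Ω[t] / (∂_t + P) Ω[t]`. -/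
def tQuotientCocycles (k : ℕ) : Submodule K (PolyForm K n) :=
  homogeneousForm (Fin n) K (MvPolynomial (Fin (n + 1)) K) k ⊓
    (LinearMap.range (tDiff P)).comap (relDiff P)

variable (P) in
/-- The coboundaries of the complex `Ω[t] / (∂_t + P) Ω[t]`, in all degrees. -/
def tQuotientBoundaries : Submodule K (PolyForm K n) :=
  LinearMap.range (relDiff P) ⊔ LinearMap.range (tDiff P)

theorem exists_cocycle_verticalPart_eq
    (smooth : Ideal.span ({P} ∪ Set.range fun i => pderiv i P) = ⊤) {k : ℕ} {b : PolyForm K n}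
    (hb : b ∈ tQuotientCocycles P k) :
    ∃ θ ∈ cocycles (grad (tP P)) (k + 1), verticalPart K _ n θ = b := by
  obtain ⟨θ, hθ, closed, ver⟩ := exists_koszul_eq_zero_of_injective_last
    (twistedDeriv_grad_comm (tP P))
    (twistedDeriv_last_injective (mem_nonZeroDivisors_of_span_pderiv_eq_top smooth)) hb.1 hb.2
  refine ⟨θ, ⟨hθ, ?_⟩, ver⟩
  rwa [SetLike.mem_coe, LinearMap.mem_ker, dTwist_eq_koszul]

theorem exists_tP_cohomology_linearEquiv
    (smooth : Ideal.span ({P} ∪ Set.range fun i => pderiv i P) = ⊤) (k : ℕ) :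
    ∃ e : Hf (tP P) (k + 1 + 1) ≃ₗ[K] (tQuotientCocycles P (k + 1) ⧸
        (tQuotientBoundaries P).comap (tQuotientCocycles P (k + 1)).subtype),
      ∀ (θ : cocycles (grad (tP P)) (k + 1 + 1)) (b : tQuotientCocycles P (k + 1)),
        verticalPart K _ n (θ : Form (n + 1) K) = b →
          e (Submodule.Quotient.mk θ) = Submodule.Quotient.mk b := by
  have inj := twistedDeriv_last_injective (mem_nonZeroDivisors_of_span_pderiv_eq_top smooth)
  have comm := twistedDeriv_grad_comm (tP P)
  refine exists_subquotient_linearEquiv ?_ ?_ ?_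
  · rintro θ ⟨hθ, closed⟩
    rw [SetLike.mem_coe, LinearMap.mem_ker, dTwist_eq_koszul,
      koszul_eq_zero_iff_of_injective_last comm inj] at closed
    exact ⟨(mem_homogeneousForm_iff.mp hθ).2, _, closed.symm⟩
  · rintro θ ⟨hθ, closed⟩
    rw [SetLike.mem_coe, LinearMap.mem_ker, dTwist_eq_koszul] at closed
    rw [cobounds, dTwist_eq_koszul]
    exact (mem_range_koszul_iff_of_injective_last comm inj closed).symm.trans
      (mem_map_koszul_homogeneousForm_iff hθ).symm
  · intro b hb
    obtain ⟨θ, hθ, rfl⟩ := exists_cocycle_verticalPart_eq smooth hb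
    exact ⟨θ, hθ, by rw [sub_self]; exact zero_mem _⟩

variable (P) in
/-- The map `ω ↦ -dP ∧ ω` from `Ω` to `Ω[t]`. -/
def negWedgeGrad : Form n K →ₗ[K] PolyForm K n :=
  -(formMonomial K n 0 ∘ₗ wedge1 (grad P))

theorem negWedgeGrad_apply (ω : Form n K) :
    negWedgeGrad P ω = -formMonomial K n 0 (wedge1 (grad P) ω) :=
  rfl

theorem relDiff_negWedgeGrad (ω : Form n K) :
    relDiff P (negWedgeGrad P ω) = -negWedgeGrad P (dRham n K ω) := by
  simp only [negWedgeGrad_apply, map_neg, relDiff_formMonomial, dRham_wedge1_grad, wedge1_wedge1,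
    map_zero, add_zero]

theorem negWedgeGrad_mem_range_tDiff {ω : Form n K} (hω : ω ∈ relSub P) :
    negWedgeGrad P ω ∈ LinearMap.range (tDiff P) := by
  obtain ⟨_, ⟨α, rfl⟩, _, ⟨β, rfl⟩, rfl⟩ := Submodule.mem_sup.mp hω
  refine ⟨negWedgeGrad P α, ?_⟩
  simp only [negWedgeGrad_apply, map_neg, map_add, tDiff_formMonomial, wedge1_mulForm,
    wedge1_wedge1, map_zero, zero_smul, zero_add, neg_zero, add_zero]

theorem negWedgeGrad_mem_range_tDiff_iff
    (smooth : Ideal.span ({P} ∪ Set.range fun i => pderiv i P) = ⊤) {ω : Form n K} :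
    negWedgeGrad P ω ∈ LinearMap.range (tDiff P) ↔ ω ∈ relSub P := by
  refine ⟨fun h => ?_, negWedgeGrad_mem_range_tDiff⟩
  rw [negWedgeGrad_apply, neg_mem_iff] at h
  exact mem_relSub_of_formMonomial_zero_wedge1_mem_range_tDiff smooth h

theorem negWedgeGrad_mem_tQuotientBoundaries_iff
    (smooth : Ideal.span ({P} ∪ Set.range fun i => pderiv i P) = ⊤) {ω : Form n K} :
    negWedgeGrad P ω ∈ tQuotientBoundaries P ↔ ω ∈ LinearMap.range (dRham n K) ⊔ relSub P := by
  constructor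
  · intro h
    obtain ⟨_, ⟨b, rfl⟩, _, ⟨a, rfl⟩, hω⟩ := Submodule.mem_sup.mp h
    have hb : relDiff P b = tDiff P (-a) + formMonomial K n 0 (wedge1 (grad P) (-ω)) := by
      rw [map_neg, map_neg, map_neg, ← negWedgeGrad_apply, ← hω]
      abel
    obtain ⟨η, c, e, rfl⟩ := exists_eq_of_relDiff_eq smooth hb
    have sub_mem_relSub : ω - dRham n K η ∈ relSub P := by
      rw [← negWedgeGrad_mem_range_tDiff_iff smooth]
      refine ⟨relDiff P e + a, ?_⟩
      rw [map_sub, ← hω, ← neg_neg (negWedgeGrad P (dRham n K η)), ← relDiff_negWedgeGrad]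
      simp only [negWedgeGrad_apply, map_add, map_neg, relDiff_relDiff, relDiff_tDiff]
      abel
    exact Submodule.mem_sup.mpr ⟨_, ⟨η, rfl⟩, _, sub_mem_relSub, add_sub_cancel _ _⟩
  · intro h
    obtain ⟨_, ⟨η, rfl⟩, ω, hω, rfl⟩ := Submodule.mem_sup.mp h
    rw [map_add]
    refine add_mem (Submodule.mem_sup_left ⟨-negWedgeGrad P η, ?_⟩)
      (Submodule.mem_sup_right (negWedgeGrad_mem_range_tDiff hω))
    rw [map_neg, relDiff_negWedgeGrad, neg_neg]

theorem negWedgeGrad_mem_homogeneousForm {k : ℕ} {ω : Form n K} (hω : ω ∈ formDeg n K k) :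
    negWedgeGrad P ω ∈
      homogeneousForm (Fin n) K (MvPolynomial (Fin (n + 1)) K) (k + 1) := by
  rw [negWedgeGrad_apply, neg_mem_iff, wedge1_eq_koszul]
  exact mapCoeff_mem_homogeneousForm _ (koszul_mem_homogeneousForm _ hω)

theorem negWedgeGrad_mem_tQuotientCocycles {k : ℕ} {ω : Form n K} (hω : ω ∈ relZ P k) :
    negWedgeGrad P ω ∈ tQuotientCocycles P (k + 1) := by
  refine ⟨negWedgeGrad_mem_homogeneousForm hω.1, ?_⟩
  rw [SetLike.mem_coe, Submodule.mem_comap, relDiff_negWedgeGrad, neg_mem_iff]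
  exact negWedgeGrad_mem_range_tDiff hω.2

theorem homogeneousPart_mem_relSub {ω : Form n K} (hω : ω ∈ relSub P) (k : ℕ) :
    homogeneousPart K k ω ∈ relSub P := by
  obtain ⟨_, ⟨α, rfl⟩, _, ⟨β, rfl⟩, rfl⟩ := Submodule.mem_sup.mp hω
  rw [map_add, mulForm_eq_mapCoeff, homogeneousPart_mapCoeff, wedge1_eq_koszul]
  refine add_mem (Submodule.mem_sup_left ⟨_, rfl⟩) (Submodule.mem_sup_right ?_)
  rw [wedge1_eq_koszul]
  exact LinearMap.map_le_range (homogeneousPart_koszul_mem_map k _ β)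

theorem mem_relB_iff {k : ℕ} {ω : Form n K} (hω : ω ∈ formDeg n K k) :
    ω ∈ relB P k ↔ ω ∈ LinearMap.range (dRham n K) ⊔ relSub P := by
  have le : relB P k ≤ LinearMap.range (dRham n K) ⊔ relSub P :=
    sup_le_sup_right LinearMap.map_le_range _
  refine ⟨fun h => le h, fun h => ?_⟩
  obtain ⟨_, ⟨η, rfl⟩, σ, hσ, rfl⟩ := Submodule.mem_sup.mp h
  rw [← homogeneousPart_of_mem (K := K) hω, map_add]
  refine add_mem (Submodule.mem_sup_left ?_)
    (Submodule.mem_sup_right (homogeneousPart_mem_relSub hσ k))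
  rw [dRham_eq_koszul]
  exact homogeneousPart_koszul_mem_map k _ η

theorem exists_sub_negWedgeGrad_mem_tQuotientBoundaries
    (smooth : Ideal.span ({P} ∪ Set.range fun i => pderiv i P) = ⊤) {k : ℕ} {b : PolyForm K n}
    (hb : b ∈ tQuotientCocycles P (k + 1)) :
    ∃ ω ∈ relZ P k, b - negWedgeGrad P ω ∈ tQuotientBoundaries P := by
  obtain ⟨hdeg, a, ha⟩ := hb
  obtain ⟨η, c, e, hη⟩ := exists_eq_of_relDiff_eq smooth (a := a) (b := b) (x := 0)
    (by rw [ha, map_zero, map_zero, add_zero])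
  have b_eq : b = negWedgeGrad P (homogeneousPart K k (-η)) + relDiff P (homogeneousPart K k c) +
      tDiff P (homogeneousPart K (k + 1) e) := by
    rw [← homogeneousPart_of_mem (K := K) hdeg, hη, negWedgeGrad_apply, map_add, map_add, map_neg,
      map_neg, map_neg, neg_neg, formMonomial, homogeneousPart_mapCoeff, wedge1_eq_koszul,
      homogeneousPart_succ_koszul, relDiff, homogeneousPart_succ_koszul, tDiff,
      homogeneousPart_mapCoeff]
  refine ⟨_, ⟨homogeneousPart_mem k (-η), ?_⟩, ?_⟩
  · rw [SetLike.mem_coe, Submodule.mem_comap, ← negWedgeGrad_mem_range_tDiff_iff smooth]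
    refine ⟨relDiff P (homogeneousPart K (k + 1) e) - a, ?_⟩
    rw [map_sub, ha, b_eq, map_add, map_add, relDiff_relDiff, relDiff_tDiff, relDiff_negWedgeGrad]
    abel
  · rw [b_eq, add_assoc, add_sub_cancel_left]
    exact add_mem (Submodule.mem_sup_left ⟨_, rfl⟩) (Submodule.mem_sup_right ⟨_, rfl⟩)

theorem exists_relH_linearEquiv
    (smooth : Ideal.span ({P} ∪ Set.range fun i => pderiv i P) = ⊤) (k : ℕ) :
    ∃ e : relH P k ≃ₗ[K] (tQuotientCocycles P (k + 1) ⧸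
        (tQuotientBoundaries P).comap (tQuotientCocycles P (k + 1)).subtype),
      ∀ (ω : relZ P k) (b : tQuotientCocycles P (k + 1)),
        negWedgeGrad P (ω : Form n K) = b →
          e (Submodule.Quotient.mk ω) = Submodule.Quotient.mk b := by
  refine exists_subquotient_linearEquiv (fun _ => negWedgeGrad_mem_tQuotientCocycles)
    (fun ω hω => ?_) fun _ => exists_sub_negWedgeGrad_mem_tQuotientBoundaries smooth
  rw [negWedgeGrad_mem_tQuotientBoundaries_iff smooth, mem_relB_iff hω.1]

theorem horizontalPart_extForm (ω : Form n K) :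
    horizontalPart K _ n (extForm ω) = formMonomial K n 0 ω := by
  ext1 s
  rw [horizontalPart_apply, formMonomial_apply, tMonomial_apply, pow_zero, one_mul, extForm,
    Finset.sum_eq_single s (fun s' _ hs' => if_neg fun h => hs' ?_) (by simp), if_pos rfl]
  exact (Finset.image_injective (Fin.castSucc_injective n) h).symm

theorem verticalPart_thetaMap (ω : Form n K) :
    verticalPart K _ n (thetaMap P ω) = negWedgeGrad P ω := by
  have horizontal : horizontalPart K _ n (wedge1 (liftDP P) (extForm ω)) =
      formMonomial K n 0 (wedge1 (grad P) ω) := by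
    rw [wedge1_eq_koszul, wedge1_eq_koszul, horizontalPart_koszul, horizontalPart_extForm]
    exact koszul_mapCoeff_of_comm (fun i q => by simp [liftDP, tMonomial_apply, grad]) ω
  have dt_wedge : verticalPart K _ n (wedge1 (dtForm n K) (wedge1 (liftDP P) (extForm ω))) =
      horizontalPart K _ n (wedge1 (liftDP P) (extForm ω)) := by
    rw [wedge1_eq_koszul (dtForm n K), verticalPart_koszul]
    ext1 s
    simp [koszul_apply, dtForm, Fin.castSucc_ne_last]
  change verticalPart K _ n (-wedge1 (dtForm n K) (wedge1 (liftDP P) (extForm ω))) = _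
  rw [map_neg, dt_wedge, horizontal, negWedgeGrad_apply]

end Comparison

/-- If `dω = P α + dP ∧ β` then `d_{tP} (ω̃ ∧ dP ∧ dt) = P α ∧ dP ∧ dt` need not vanish: in general
`ω̃ ∧ dP ∧ dt` becomes closed only after adding a form without `dt`, which is why the class of `ω`
under `e k` is described by the coefficients involving `dt`. -/
theorem hypersurface_cohomology_as_twisted_deRham_general {K : Type*} [CommRing K] {n : ℕ}
    (P : MvPolynomial (Fin n) K)
    (hsmooth : Ideal.span ({P} ∪ Set.range fun i => pderiv i P) = ⊤) :
    ∃ e : ∀ k : ℕ, relH P k ≃ₗ[K] Hf (tP P) (k + 2), ∀ (k : ℕ) (ω : relZ P k),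
      (∃ θ : cocycles (grad (tP P)) (k + 2),
        ∀ s, Fin.last n ∈ s → (θ : Form (n + 1) K) s = thetaMap P (ω : Form n K) s) ∧
      ∀ θ : cocycles (grad (tP P)) (k + 2),
        (∀ s, Fin.last n ∈ s → (θ : Form (n + 1) K) s = thetaMap P (ω : Form n K) s) →
          e k (Submodule.Quotient.mk ω) = Submodule.Quotient.mk θ := by
  choose e₁ he₁ using exists_relH_linearEquiv hsmooth
  choose e₂ he₂ using exists_tP_cohomology_linearEquiv hsmooth
  refine ⟨fun k => e₁ k ≪≫ₗ (e₂ k).symm, fun k ω => ?_⟩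
  simp only [← verticalPart_eq_iff (K := K), verticalPart_thetaMap]
  have mem := negWedgeGrad_mem_tQuotientCocycles ω.2
  constructor
  · obtain ⟨θ, hθ, ver⟩ := exists_cocycle_verticalPart_eq hsmooth mem
    exact ⟨⟨θ, hθ⟩, ver⟩
  · intro θ ver
    rw [LinearEquiv.trans_apply, LinearEquiv.symm_apply_eq]
    exact (he₁ k ω ⟨_, mem⟩ rfl).trans (he₂ k θ ⟨_, mem⟩ ver).symm

/-- Let `F` be a field of characteristic zero and
`P ∈ F[x_1,…,x_n]` with the hypersurface `P = 0` smooth (the ideal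
`(P, ∂_1P, …, ∂_nP)` is the unit ideal).  Then the map `ω ↦ ω̃∧dP∧dt` induces
for every `k` an isomorphism
`H^k(Ω/(P,dP)) ≅ H^{k+2}_{tP}(F^{n+1})`. -/
theorem hypersurface_cohomology_as_twisted_deRham {F : Type*} [Field F]
    [CharZero F] {n : ℕ} (hn : 0 < n) (P : MvPolynomial (Fin n) F)
    (hsmooth :
      Ideal.span ({P} ∪ Set.range fun i => pderiv i P) =
        (⊤ : Ideal (MvPolynomial (Fin n) F))) :
    ∃ e : ∀ k : ℕ, (relH P k) ≃ₗ[F] Hf (tP P) (k + 2),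
      ∀ (k : ℕ) (ω : relZ P k) (θ : cocycles (grad (tP P)) (k + 2)),
        (θ : Form (n + 1) F) = thetaMap P (ω : Form n F) →
          e k (Submodule.Quotient.mk ω) = Submodule.Quotient.mk θ := by
  obtain ⟨e, he⟩ := hypersurface_cohomology_as_twisted_deRham_general P hsmooth
  exact ⟨e, fun k ω θ hθ => (he k ω).2 θ fun s _ => congrFun hθ s⟩

end
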